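/- arXiv:0807.3980 — 3 statements merged into one kernel-verified Lean document; each statement's English description precedes it below -/
import Mathlib

section
/- Let Γ be a torsion-free discrete subgroup of SL₂(ℝ)×SL₂(ℝ). Then Γ acts properly discontinuously on SL₂(ℝ) by (γ₁,γ₂)·g = γ₁gγ₂⁻¹ if and only if, possibly after composing the inclusion of Γ with the swap automorphism (γ₁,γ₂) ↦ (γ₂,γ₁) of SL₂(ℝ)×SL₂(ℝ), there exist a discrete subgroup Γ₀ of SL₂(ℝ) and a group homomorphism φ : Γ₀ → SL₂(ℝ) such that Γ = {(γ, φ(γ)) : γ ∈ Γ₀} and, for every real C > 0, all but finitely many γ ∈ Γ₀ satisfy C·‖φ(γ)‖ < ‖γ‖. -/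
/-!
STATEMENT 0: torsion-free discrete subgroups of SL₂(ℝ)×SL₂(ℝ) act properly
discontinuously on SL₂(ℝ) (by (γ₁,γ₂)·g = γ₁gγ₂⁻¹) iff, up to swapping the two
factors, they are graphs of the stated form.
-/

open Matrix

/-- `SL₂(ℝ)`. -/
abbrev SL2R := Matrix.SpecialLinearGroup (Fin 2) ℝ

/-- The topology on SL₂(ℝ) as a subset of the 2×2 real matrices. -/
instance : TopologicalSpace SL2R :=
  TopologicalSpace.induced (fun g => (g : Matrix (Fin 2) (Fin 2) ℝ)) inferInstance

/-- The operator norm of `g ∈ SL₂(ℝ)` acting on Euclidean ℝ². -/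
noncomputable def sl2OpNorm (g : SL2R) : ℝ :=
  ‖Matrix.toEuclideanCLM (𝕜 := ℝ) (g : Matrix (Fin 2) (Fin 2) ℝ)‖

set_option linter.unusedSimpArgs false

theorem cmul (a b : SL2R) : ((a * b : SL2R) : Matrix (Fin 2) (Fin 2) ℝ) =
    (a : Matrix (Fin 2) (Fin 2) ℝ) * (b : Matrix (Fin 2) (Fin 2) ℝ) := rfl

theorem cinv (a : SL2R) : ((a⁻¹ : SL2R) : Matrix (Fin 2) (Fin 2) ℝ) =
    Matrix.adjugate (a : Matrix (Fin 2) (Fin 2) ℝ) := rfl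

theorem cmk (a : Matrix (Fin 2) (Fin 2) ℝ) (h : a.det = 1) :
    (((⟨a, h⟩ : SL2R)) : Matrix (Fin 2) (Fin 2) ℝ) = a := rfl

theorem N_mul_le (a b : SL2R) : sl2OpNorm (a * b) ≤ sl2OpNorm a * sl2OpNorm b := by
  unfold sl2OpNorm
  rw [cmul, map_mul]
  exact norm_mul_le _ _

theorem N_orth {k : SL2R} (hk : (k : Matrix (Fin 2) (Fin 2) ℝ)ᵀ * (k : Matrix (Fin 2) (Fin 2) ℝ) = 1) :
    sl2OpNorm k = 1 := by
  unfold sl2OpNorm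
  apply CStarRing.norm_of_mem_unitary
  have h2 := mul_eq_one_comm.mp hk
  rw [Unitary.mem_iff, ← map_star, ← map_mul, ← map_mul]
  rw [Matrix.star_eq_conjTranspose, Matrix.conjTranspose_eq_transpose_of_trivial, hk, h2, map_one]
  simp

theorem N_one : sl2OpNorm 1 = 1 := N_orth (by simp)

theorem N_transpose (a : SL2R) : sl2OpNorm a.transpose = sl2OpNorm a := by
  unfold sl2OpNorm
  rw [← norm_star (Matrix.toEuclideanCLM (𝕜 := ℝ) (a : Matrix (Fin 2) (Fin 2) ℝ)), ← map_star,
    Matrix.star_eq_conjTranspose, Matrix.conjTranspose_eq_transpose_of_trivial]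
  rfl

/-- Rotation by a right angle. -/
def rotJ : SL2R := ⟨!![0, -1; 1, 0], by simp [Matrix.det_fin_two]⟩

theorem rotJc : (rotJ : Matrix (Fin 2) (Fin 2) ℝ) = !![0, -1; 1, 0] := rfl

theorem ctr (a : SL2R) : (a.transpose : Matrix (Fin 2) (Fin 2) ℝ) = (a : Matrix (Fin 2) (Fin 2) ℝ)ᵀ := rfl

theorem rotJ_orth : (rotJ : Matrix (Fin 2) (Fin 2) ℝ)ᵀ * (rotJ : Matrix (Fin 2) (Fin 2) ℝ) = 1 := by
  ext i j; fin_cases i <;> fin_cases j <;> simp [rotJc, cmul, Matrix.mul_apply, Fin.sum_univ_two]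

theorem orth_inv {k : SL2R} (hk : (k : Matrix (Fin 2) (Fin 2) ℝ)ᵀ * (k : Matrix (Fin 2) (Fin 2) ℝ) = 1) :
    k⁻¹ = k.transpose := by
  symm
  apply eq_inv_of_mul_eq_one_left
  apply Subtype.ext
  exact hk

theorem N_orth_inv {k : SL2R} (hk : (k : Matrix (Fin 2) (Fin 2) ℝ)ᵀ * (k : Matrix (Fin 2) (Fin 2) ℝ) = 1) :
    sl2OpNorm k⁻¹ = 1 := by
  rw [orth_inv hk, N_transpose, N_orth hk]

theorem inv_eq_J (a : SL2R) : a⁻¹ = rotJ * a.transpose * rotJ⁻¹ := by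
  rw [orth_inv rotJ_orth]
  apply Subtype.ext
  rw [cinv, Matrix.adjugate_fin_two]
  ext i j; fin_cases i <;> fin_cases j <;>
    simp [rotJc, cmul, Matrix.mul_apply, Fin.sum_univ_two, ctr, Matrix.vecMul, dotProduct]

theorem N_nonneg (a : SL2R) : 0 ≤ sl2OpNorm a := norm_nonneg _

theorem N_inv_le (a : SL2R) : sl2OpNorm a⁻¹ ≤ sl2OpNorm a := by
  rw [inv_eq_J]
  refine (N_mul_le _ _).trans ?_
  rw [N_orth_inv rotJ_orth, mul_one]
  refine (N_mul_le _ _).trans ?_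
  rw [N_orth rotJ_orth, one_mul, N_transpose]

theorem N_inv (a : SL2R) : sl2OpNorm a⁻¹ = sl2OpNorm a :=
  le_antisymm (N_inv_le a) (by simpa using N_inv_le a⁻¹)

theorem N_one_le (a : SL2R) : 1 ≤ sl2OpNorm a := by
  have h := N_mul_le a a⁻¹
  rw [mul_inv_cancel, N_one, N_inv] at h
  nlinarith [N_nonneg a]

theorem N_pos (a : SL2R) : 0 < sl2OpNorm a := lt_of_lt_of_le one_pos (N_one_le a)

theorem coe_isEmbedding : Topology.IsEmbedding (fun g : SL2R => (g : Matrix (Fin 2) (Fin 2) ℝ)) :=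
  ⟨⟨rfl⟩, Subtype.val_injective⟩

theorem coe_isClosedEmbedding :
    Topology.IsClosedEmbedding (fun g : SL2R => (g : Matrix (Fin 2) (Fin 2) ℝ)) := by
  refine ⟨coe_isEmbedding, ?_⟩
  have : Set.range (fun g : SL2R => (g : Matrix (Fin 2) (Fin 2) ℝ)) =
      Matrix.det ⁻¹' {1} := by
    ext m
    constructor
    · rintro ⟨g, rfl⟩; exact g.2
    · intro h; exact ⟨⟨m, h⟩, rfl⟩
  rw [this]
  exact isClosed_singleton.preimage (Continuous.matrix_det continuous_id)

instance : T2Space SL2R := coe_isEmbedding.t2Space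

/-- The linear equivalence between matrices and operators. -/
noncomputable def matCLE : Matrix (Fin 2) (Fin 2) ℝ ≃L[ℝ]
    (EuclideanSpace ℝ (Fin 2) →L[ℝ] EuclideanSpace ℝ (Fin 2)) :=
  (Matrix.toEuclideanCLM (n := Fin 2) (𝕜 := ℝ)).toAlgEquiv.toLinearEquiv.toContinuousLinearEquiv

theorem N_eq (g : SL2R) : sl2OpNorm g = ‖matCLE (g : Matrix (Fin 2) (Fin 2) ℝ)‖ := rfl

theorem N_continuous : Continuous sl2OpNorm := by
  have : sl2OpNorm = fun g : SL2R => ‖matCLE (g : Matrix (Fin 2) (Fin 2) ℝ)‖ := rfl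
  rw [this]
  exact (matCLE.continuous.comp coe_isEmbedding.continuous).norm

theorem N_compact (C : ℝ) : IsCompact {g : SL2R | sl2OpNorm g ≤ C} := by
  have h : IsCompact (matCLE ⁻¹' (Metric.closedBall 0 C)) :=
    matCLE.toHomeomorph.isCompact_preimage.mpr (isCompact_closedBall 0 C)
  have h2 := coe_isClosedEmbedding.isCompact_preimage h
  convert h2 using 1
  ext g
  simp [N_eq]

theorem N_bdd {K : Set SL2R} (hK : IsCompact K) : ∃ C : ℝ, 0 < C ∧ ∀ g ∈ K, sl2OpNorm g ≤ C := by
  obtain ⟨C, hC⟩ := (hK.image N_continuous).bddAbove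
  refine ⟨max C 1, by positivity, fun g hg => le_max_of_le_left (hC ⟨g, hg, rfl⟩)⟩

/-- Diagonal elements. -/
noncomputable def dg (t : ℝ) : SL2R :=
  ⟨!![Real.exp t, 0; 0, Real.exp (-t)], by simp [Matrix.det_fin_two, ← Real.exp_add]⟩

theorem dgc (t : ℝ) : (dg t : Matrix (Fin 2) (Fin 2) ℝ) = !![Real.exp t, 0; 0, Real.exp (-t)] := rfl

theorem dg_add (s t : ℝ) : dg (s + t) = dg s * dg t := by
  apply Subtype.ext
  ext i j; fin_cases i <;> fin_cases j <;>
    simp [dgc, cmul, Matrix.mul_apply, Fin.sum_univ_two, ← Real.exp_add, add_comm]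

theorem dg_inv (t : ℝ) : (dg t)⁻¹ = dg (-t) := by
  symm
  apply eq_inv_of_mul_eq_one_left
  rw [← dg_add]
  apply Subtype.ext
  ext i j; fin_cases i <;> fin_cases j <;> simp [dgc]

theorem N_dg (t : ℝ) : sl2OpNorm (dg t) = Real.exp |t| := by
  have h : (dg t : Matrix (Fin 2) (Fin 2) ℝ) = Matrix.diagonal ![Real.exp t, Real.exp (-t)] := by
    ext i j; fin_cases i <;> fin_cases j <;> simp [dgc]
  unfold sl2OpNorm
  rw [h]
  have h3 := Matrix.l2_opNorm_diagonal (𝕜 := ℝ) ![Real.exp t, Real.exp (-t)]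
  rw [Matrix.l2_opNorm_def] at h3
  refine Eq.trans h3 ?_
  rw [Pi.norm_def]
  simp only [Fin.univ_succ]
  simp
  rcases le_total 0 t with ht | ht
  · rw [abs_of_nonneg ht, max_eq_left]; exact Real.exp_le_exp.mpr (by linarith)
  · rw [abs_of_nonpos ht, max_eq_right]; exact Real.exp_le_exp.mpr (by linarith)

/-- Orthogonality. -/
def Orth (k : SL2R) : Prop :=
  (k : Matrix (Fin 2) (Fin 2) ℝ)ᵀ * (k : Matrix (Fin 2) (Fin 2) ℝ) = 1

theorem Orth.mul {k l : SL2R} (hk : Orth k) (hl : Orth l) : Orth (k * l) := by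
  unfold Orth at *
  rw [cmul, Matrix.transpose_mul, Matrix.mul_assoc,
    ← Matrix.mul_assoc _ _ (l : Matrix (Fin 2) (Fin 2) ℝ), hk, Matrix.one_mul, hl]

theorem Orth.inv {k : SL2R} (hk : Orth k) : Orth k⁻¹ := by
  rw [orth_inv hk]
  unfold Orth at *
  have := mul_eq_one_comm.mp hk
  simpa [SpecialLinearGroup.transpose] using this

/-- Rotations. -/
noncomputable def rot (θ : ℝ) : SL2R :=
  ⟨!![Real.cos θ, -Real.sin θ; Real.sin θ, Real.cos θ], by
    simp [Matrix.det_fin_two]; nlinarith [Real.sin_sq_add_cos_sq θ]⟩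

theorem rotc (θ : ℝ) : (rot θ : Matrix (Fin 2) (Fin 2) ℝ) = !![Real.cos θ, -Real.sin θ; Real.sin θ, Real.cos θ] := rfl

theorem rot_orth (θ : ℝ) : Orth (rot θ) := by
  unfold Orth
  ext i j; fin_cases i <;> fin_cases j <;>
    simp [rotc, cmul, Matrix.mul_apply, Fin.sum_univ_two] <;> nlinarith [Real.sin_sq_add_cos_sq θ]

theorem orth_cols (b : SL2R) (h : b 0 0 * b 0 1 + b 1 0 * b 1 1 = 0) :
    ∃ (k : SL2R) (t : ℝ), Orth k ∧ b = k * dg t := by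
  have hd := b.2
  rw [Matrix.det_fin_two] at hd
  change b 0 0 * b 1 1 - b 0 1 * b 1 0 = 1 at hd
  set p := b 0 0
  set q := b 0 1
  set r := b 1 0
  set s := b 1 1
  have hn : 0 < p ^ 2 + r ^ 2 := by
    rcases eq_or_ne p 0 with hp | hp
    · have : r ≠ 0 := by rintro hr; rw [hp, hr] at hd; norm_num at hd
      positivity
    · positivity
  obtain ⟨t, ht⟩ : ∃ t, Real.exp t = Real.sqrt (p ^ 2 + r ^ 2) :=
    ⟨Real.log _, Real.exp_log (Real.sqrt_pos.mpr hn)⟩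
  have ht2 : Real.exp t * Real.exp t = p ^ 2 + r ^ 2 := by rw [ht, Real.mul_self_sqrt hn.le]
  have hq : q * (p ^ 2 + r ^ 2) = - r := by linear_combination p * h - r * hd
  have hs : s * (p ^ 2 + r ^ 2) = p := by linear_combination r * h + p * hd
  have hee : Real.exp t * Real.exp (-t) = 1 := by rw [← Real.exp_add]; simp
  refine ⟨b * dg (-t), t, ?_, ?_⟩
  · unfold Orth
    have hE : Real.exp (-t) * Real.exp (-t) * (p ^ 2 + r ^ 2) = 1 := by
      rw [← ht2]; linear_combination (Real.exp t * Real.exp (-t) + 1) * hee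
    have hF : (q ^ 2 + s ^ 2) * (p ^ 2 + r ^ 2) = 1 := by
      linear_combination q * hq + s * hs + hd
    ext i j; fin_cases i <;> fin_cases j <;>
      simp [dgc, cmul, Matrix.mul_apply, Fin.sum_univ_two]
    · linear_combination hE
    · linear_combination Real.exp (-t) * Real.exp t * h
    · linear_combination Real.exp (-t) * Real.exp t * h
    · rw [← ht2] at hF
      linear_combination hF
  · rw [mul_assoc, ← dg_add]
    have : dg (-t + t) = 1 := by rw [dg_add, ← dg_inv]; simp
    rw [this, mul_one]

theorem cartan0 (a : SL2R) : ∃ (k l : SL2R) (t : ℝ), Orth k ∧ Orth l ∧ a = k * dg t * l := by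
  set f : ℝ → ℝ := fun θ => (a * rot θ) 0 0 * (a * rot θ) 0 1 + (a * rot θ) 1 0 * (a * rot θ) 1 1
    with hf
  have hfe : ∀ θ, f θ = (a 0 0 * Real.cos θ + a 0 1 * Real.sin θ) *
      (a 0 0 * -Real.sin θ + a 0 1 * Real.cos θ) + (a 1 0 * Real.cos θ + a 1 1 * Real.sin θ) *
      (a 1 0 * -Real.sin θ + a 1 1 * Real.cos θ) := by
    intro θ
    simp [hf, rotc, cmul, Matrix.mul_apply, Fin.sum_univ_two]
  have hc : Continuous f := by
    rw [funext hfe]; fun_prop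
  have h0 : f (Real.pi / 2) = - f 0 := by
    rw [hfe, hfe]; simp; ring
  obtain ⟨θ, hθ⟩ : ∃ θ, f θ = 0 := by
    rcases le_total (f 0) 0 with h | h
    · exact mem_range_of_exists_le_of_exists_ge hc ⟨0, h⟩ ⟨Real.pi / 2, by rw [h0]; linarith⟩
    · exact mem_range_of_exists_le_of_exists_ge hc ⟨Real.pi / 2, by rw [h0]; linarith⟩ ⟨0, h⟩
  obtain ⟨k, t, hk, hkt⟩ := orth_cols (a * rot θ) hθ
  exact ⟨k, (rot θ)⁻¹, t, hk, (rot_orth θ).inv, by rw [← hkt]; group⟩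

theorem dg_neg_J (t : ℝ) : dg t = rotJ⁻¹ * dg (-t) * rotJ := by
  rw [orth_inv rotJ_orth]
  apply Subtype.ext
  ext i j; fin_cases i <;> fin_cases j <;>
    simp [dgc, rotJc, ctr, cmul, Matrix.mul_apply, Fin.sum_univ_two]

theorem N_orth_mul {k : SL2R} (hk : Orth k) (a : SL2R) : sl2OpNorm (k * a) = sl2OpNorm a := by
  apply le_antisymm
  · simpa [N_orth hk] using N_mul_le k a
  · simpa [N_orth_inv hk] using N_mul_le k⁻¹ (k * a)

theorem N_mul_orth {k : SL2R} (hk : Orth k) (a : SL2R) : sl2OpNorm (a * k) = sl2OpNorm a := by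
  apply le_antisymm
  · simpa [N_orth hk] using N_mul_le a k
  · simpa [N_orth_inv hk] using N_mul_le (a * k) k⁻¹

theorem cartan (a : SL2R) : ∃ (k l : SL2R), Orth k ∧ Orth l ∧
    a = k * dg (Real.log (sl2OpNorm a)) * l := by
  obtain ⟨k, l, t, hk, hl, h⟩ := cartan0 a
  have hN : Real.log (sl2OpNorm a) = |t| := by
    rw [h, N_mul_orth hl, N_orth_mul hk, N_dg, Real.log_exp]
  rw [hN]
  rcases le_total 0 t with ht | ht
  · rw [abs_of_nonneg ht]; exact ⟨k, l, hk, hl, h⟩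
  · rw [abs_of_nonpos ht]
    refine ⟨k * rotJ⁻¹, rotJ * l, hk.mul (Orth.inv rotJ_orth), Orth.mul rotJ_orth hl, ?_⟩
    rw [h, dg_neg_J t]; group

theorem exists_bdd (a b : SL2R) : ∃ g : SL2R, sl2OpNorm g = 1 ∧
    sl2OpNorm (a * g * b⁻¹) = Real.exp |Real.log (sl2OpNorm a) - Real.log (sl2OpNorm b)| := by
  obtain ⟨k, l, hk, hl, h⟩ := cartan a
  obtain ⟨k', l', hk', hl', h'⟩ := cartan b
  refine ⟨l⁻¹ * l', N_orth (hl.inv.mul hl'), ?_⟩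
  set s := Real.log (sl2OpNorm a)
  set t := Real.log (sl2OpNorm b)
  have : a * (l⁻¹ * l') * b⁻¹ = k * dg (s - t) * k'⁻¹ := by
    rw [h, h', sub_eq_add_neg, dg_add, ← dg_inv]; group
  rw [this, N_mul_orth hk'.inv, N_orth_mul hk, N_dg]

/-- Key group-theoretic step, one sign. -/
theorem onesided {G : Type*} [Group G] (f : G → ℝ)
    (hfin : ∀ R : ℝ, {g | |f g| ≤ R}.Finite)
    (hr : ∀ s, ∃ B : ℝ, ∀ g, |f (g * s) - f g| ≤ B)
    (hl : ∀ s, ∃ B : ℝ, ∀ g, |f (s * g) - f g| ≤ B)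
    (hinv : ∀ g, f g⁻¹ = f g) (d : G) (hd : Function.Injective (fun n : ℕ => d ^ n))
    (M : ℕ) (hM : ∀ m ≥ M, 0 < f (d ^ m)) : {g | f g ≤ 0}.Finite := by
  have hdfin : ∀ R : ℝ, {m : ℕ | f (d ^ m) ≤ R}.Finite := by
    intro R
    refine ((Set.finite_lt_nat M).union ((hfin R).preimage hd.injOn)).subset ?_
    intro m hm
    rcases lt_or_ge m M with h | h
    · exact Or.inl h
    · right
      change |f (d ^ m)| ≤ R
      rw [abs_of_pos (hM m h)]; exact hm
  have h1 : ∀ g, {m : ℕ | f (g * d ^ m) ≤ 0}.Finite := by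
    intro g
    obtain ⟨B, hB⟩ := hl g
    refine (hdfin B).subset fun m hm => ?_
    have := abs_le.mp (hB (d ^ m))
    simp only [Set.mem_ofPred_eq] at *
    linarith
  have h2 : ∀ g, {m : ℕ | f (g * (d ^ m)⁻¹) ≤ 0}.Finite := by
    intro g
    obtain ⟨B, hB⟩ := hl g
    refine (hdfin B).subset fun m hm => ?_
    have := abs_le.mp (hB (d ^ m)⁻¹)
    rw [hinv] at this
    simp only [Set.mem_ofPred_eq] at *
    linarith
  obtain ⟨B, hB⟩ := hr d
  refine ((hfin B).biUnion fun g _ => (h2 g).image (fun m => g * (d ^ m)⁻¹)).subset ?_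
  intro g hg
  obtain ⟨m, hm⟩ := (h1 g).infinite_compl.nonempty
  have hex : ∃ m, 0 < f (g * d ^ m) := ⟨m, by simpa using hm⟩
  classical
  have hs := Nat.find_spec hex
  rcases hn : Nat.find hex with _ | n
  · rw [hn] at hs; simp at hs hg; linarith
  · have hlt : ¬ 0 < f (g * d ^ n) := Nat.find_min hex (by omega)
    rw [hn, pow_succ, ← mul_assoc] at hs
    have hb := abs_le.mp (hB (g * d ^ n))
    simp only [Set.mem_iUnion]
    refine ⟨g * d ^ n, ?_, n, ?_, ?_⟩
    · change |f (g * d ^ n)| ≤ B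
      rw [abs_of_nonpos (not_lt.mp hlt)]; linarith
    · simpa using hg
    · simp

theorem twosided {G : Type*} [Group G] (f : G → ℝ)
    (hfin : ∀ R : ℝ, {g | |f g| ≤ R}.Finite)
    (hr : ∀ s, ∃ B : ℝ, ∀ g, |f (g * s) - f g| ≤ B)
    (hl : ∀ s, ∃ B : ℝ, ∀ g, |f (s * g) - f g| ≤ B)
    (hinv : ∀ g, f g⁻¹ = f g) (htf : ∀ g : G, IsOfFinOrder g → g = 1) :
    {g | f g ≤ 0}.Finite ∨ {g | 0 ≤ f g}.Finite := by
  rcases subsingleton_or_nontrivial G with h | h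
  · exact Or.inl (Set.toFinite _)
  obtain ⟨d, hd1⟩ := exists_ne (1 : G)
  have hd : Function.Injective (fun n : ℕ => d ^ n) :=
    injective_pow_iff_not_isOfFinOrder.mpr fun h => hd1 (htf d h)
  obtain ⟨B, hB⟩ := hr d
  obtain ⟨M, hM⟩ := ((hfin (max B 0)).preimage hd.injOn).bddAbove
  have hM' : ∀ m ≥ M + 1, max B 0 < |f (d ^ m)| := by
    intro m hm
    by_contra hc
    have := hM (show m ∈ _ from not_lt.mp hc)
    omega
  have hB0 := le_max_left B 0
  have hB1 := le_max_right B 0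
  rcases le_total (f (d ^ (M + 1))) 0 with h0 | h0
  · right
    have hneg : ∀ m ≥ M + 1, f (d ^ m) < 0 := by
      intro m hm
      induction m, hm using Nat.le_induction with
      | base => have := hM' _ le_rfl; rw [abs_of_nonpos h0] at this; linarith
      | succ m hm ih =>
        have h1 := hM' m hm
        have h2 := abs_le.mp (hB (d ^ m))
        rw [abs_of_neg ih] at h1
        rw [← pow_succ] at h2
        linarith
    have := onesided (fun g => - f g) (by simpa using hfin)
      (fun s => (hr s).imp fun B h g => by rw [← abs_neg]; convert h g using 2; ring)
      (fun s => (hl s).imp fun B h g => by rw [← abs_neg]; convert h g using 2; ring)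
      (by simpa using hinv) d hd (M + 1) (fun m hm => by simpa using hneg m hm)
    simpa using this
  · left
    have hpos : ∀ m ≥ M + 1, 0 < f (d ^ m) := by
      intro m hm
      induction m, hm using Nat.le_induction with
      | base => have := hM' _ le_rfl; rw [abs_of_nonneg h0] at this; linarith
      | succ m hm ih =>
        have h1 := hM' m hm
        have h2 := abs_le.mp (hB (d ^ m))
        rw [abs_of_pos ih] at h1
        rw [← pow_succ] at h2
        linarith
    exact onesided f hfin hr hl hinv d hd (M + 1) hpos

theorem discrete_of_finite (H : Subgroup SL2R)
    (h : ∀ R : ℝ, {γ : H | sl2OpNorm (γ : SL2R) ≤ R}.Finite) : DiscreteTopology H := by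
  rw [discreteTopology_iff_isOpen_singleton]
  intro x
  set U : Set H := {γ : H | sl2OpNorm (γ : SL2R) < sl2OpNorm (x : SL2R) + 1} with hU
  have hUo : IsOpen U :=
    isOpen_lt (N_continuous.comp continuous_subtype_val) continuous_const
  have hUf : U.Finite := (h (sl2OpNorm (x : SL2R) + 1)).subset fun γ hγ => by
    change sl2OpNorm (γ : SL2R) ≤ _
    exact le_of_lt hγ
  have hx : ({x} : Set H) = U \ (U \ {x}) := by
    ext y
    simp only [Set.mem_singleton_iff, Set.mem_diff, not_and, not_not]
    constructor
    · rintro rfl; exact ⟨by simp [hU], fun _ => rfl⟩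
    · rintro ⟨h1, h2⟩; exact h2 h1
  rw [hx]
  exact hUo.sdiff (hUf.subset Set.diff_subset).isClosed

theorem graph_of (Γ : Subgroup (SL2R × SL2R))
    (htf : ∀ g ∈ Γ, IsOfFinOrder g → g = 1)
    (h : ∀ C : ℝ, 0 < C → {γ : Γ | sl2OpNorm γ.1.1 ≤ C * sl2OpNorm γ.1.2}.Finite) :
    ∃ Γ₀ : Subgroup SL2R, ∃ φ : Γ₀ →* SL2R,
      DiscreteTopology Γ₀ ∧
      (Γ : Set (SL2R × SL2R)) = {x : SL2R × SL2R | ∃ γ : Γ₀, x = ((γ : SL2R), φ γ)} ∧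
      ∀ C : ℝ, 0 < C →
        {γ : Γ₀ | ¬ C * sl2OpNorm (φ γ) < sl2OpNorm (γ : SL2R)}.Finite := by
  set p : Γ →* SL2R := (MonoidHom.fst SL2R SL2R).comp Γ.subtype with hp
  have hinj : Function.Injective p := by
    rw [injective_iff_map_eq_one]
    intro g hg
    by_contra hne
    have hg1 : g.1.1 = 1 := hg
    have hinf : Function.Injective (fun n : ℕ => g ^ n) := by
      refine injective_pow_iff_not_isOfFinOrder.mpr fun hfo => hne ?_
      apply Subtype.ext
      exact htf g.1 g.2 (Γ.subtype.isOfFinOrder hfo)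
    have := (h 1 one_pos).preimage hinf.injOn
    refine Set.infinite_univ (this.subset fun n _ => ?_)
    change sl2OpNorm (g ^ n : Γ).1.1 ≤ 1 * sl2OpNorm (g ^ n : Γ).1.2
    have h1 : (g ^ n : Γ).1.1 = 1 := by
      change p (g ^ n) = 1
      rw [map_pow, hg, one_pow]
    rw [h1, N_one, one_mul]
    exact N_one_le _
  set e : Γ ≃* p.range := MonoidHom.ofInjective hinj with he
  have he1 : ∀ γ : p.range, (e.symm γ).1.1 = (γ : SL2R) := by
    intro γ
    have : (e (e.symm γ) : SL2R) = γ := by rw [e.apply_symm_apply]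
    exact this
  refine ⟨p.range, ((MonoidHom.snd SL2R SL2R).comp Γ.subtype).comp e.symm.toMonoidHom, ?_, ?_, ?_⟩
  · apply discrete_of_finite
    intro R
    refine ((h (max R 1) (by positivity)).preimage (f := e.symm) e.symm.injective.injOn).subset ?_
    intro γ hγ
    change sl2OpNorm (e.symm γ).1.1 ≤ _ * sl2OpNorm (e.symm γ).1.2
    rw [he1]
    have h1 : sl2OpNorm (γ : SL2R) ≤ max R 1 := le_max_of_le_left hγ
    have h2 := N_one_le (e.symm γ).1.2
    have h3 := le_max_right R 1
    nlinarith
  · ext x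
    constructor
    · intro hx
      refine ⟨e ⟨x, hx⟩, ?_⟩
      apply Prod.ext
      · rfl
      · change x.2 = (e.symm (e ⟨x, hx⟩)).1.2
        rw [e.symm_apply_apply]
    · rintro ⟨γ, rfl⟩
      have : ((γ : SL2R), (e.symm γ).1.2) = (e.symm γ).1 := Prod.ext (he1 γ).symm rfl
      change ((γ : SL2R), (e.symm γ).1.2) ∈ Γ
      rw [this]
      exact (e.symm γ).2
  · intro C hC
    refine ((h C hC).preimage (f := e.symm) e.symm.injective.injOn).subset ?_
    intro γ hγ
    change sl2OpNorm (e.symm γ).1.1 ≤ _ * sl2OpNorm (e.symm γ).1.2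
    rw [he1]
    exact not_lt.mp hγ

/-- Difference of the two Cartan projections. -/
noncomputable def cdiff (x : SL2R × SL2R) : ℝ :=
  Real.log (sl2OpNorm x.1) - Real.log (sl2OpNorm x.2)

theorem log_mul_le (a b : SL2R) : Real.log (sl2OpNorm (a * b)) ≤
    Real.log (sl2OpNorm a) + Real.log (sl2OpNorm b) := by
  rw [← Real.log_mul (N_pos a).ne' (N_pos b).ne']
  exact Real.log_le_log (N_pos _) (N_mul_le a b)

theorem log_right (a b : SL2R) : |Real.log (sl2OpNorm (a * b)) - Real.log (sl2OpNorm a)| ≤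
    Real.log (sl2OpNorm b) := by
  have h1 := log_mul_le a b
  have h2 := log_mul_le (a * b) b⁻¹
  rw [mul_inv_cancel_right, N_inv] at h2
  rw [abs_le]; constructor <;> linarith

theorem log_left (a b : SL2R) : |Real.log (sl2OpNorm (b * a)) - Real.log (sl2OpNorm a)| ≤
    Real.log (sl2OpNorm b) := by
  have h1 := log_mul_le b a
  have h2 := log_mul_le b⁻¹ (b * a)
  rw [inv_mul_cancel_left, N_inv] at h2
  rw [abs_le]; constructor <;> linarith

theorem cdiff_le_iff (x : SL2R × SL2R) (C : ℝ) (hC : 0 < C) :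
    sl2OpNorm x.1 ≤ C * sl2OpNorm x.2 ↔ cdiff x ≤ Real.log C := by
  rw [← Real.log_le_log_iff (N_pos _) (mul_pos hC (N_pos _)), Real.log_mul hC.ne' (N_pos _).ne',
    cdiff, sub_le_iff_le_add]

theorem cdiff_swap (x : SL2R × SL2R) : cdiff x.swap = - cdiff x := by
  simp [cdiff]

theorem forward (Γ : Subgroup (SL2R × SL2R))
    (htf : ∀ g ∈ Γ, IsOfFinOrder g → g = 1)
    (h : ∀ K L : Set SL2R, IsCompact K → IsCompact L →
      {γ : Γ | ((fun g => (γ : SL2R × SL2R).1 * g * ((γ : SL2R × SL2R).2)⁻¹) '' K ∩ L).Nonempty}.Finite) :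
    (∀ R : ℝ, {γ : Γ | cdiff γ.1 ≤ R}.Finite) ∨ (∀ R : ℝ, {γ : Γ | - cdiff γ.1 ≤ R}.Finite) := by
  have hfin : ∀ R : ℝ, {γ : Γ | |cdiff γ.1| ≤ R}.Finite := by
    intro R
    refine (h _ _ (N_compact 1) (N_compact (Real.exp R))).subset fun γ hγ => ?_
    obtain ⟨g, hg1, hg2⟩ := exists_bdd γ.1.1 γ.1.2
    refine ⟨_, ⟨g, hg1.le, rfl⟩, ?_⟩
    change sl2OpNorm (γ.1.1 * g * γ.1.2⁻¹) ≤ Real.exp R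
    rw [hg2]
    exact Real.exp_le_exp.mpr hγ
  have key := twosided (G := Γ) (fun γ => cdiff γ.1) hfin
    (fun s => ⟨Real.log (sl2OpNorm s.1.1) + Real.log (sl2OpNorm s.1.2), fun g => by
      have h1 := abs_le.mp (log_right g.1.1 s.1.1)
      have h2 := abs_le.mp (log_right g.1.2 s.1.2)
      have e : cdiff (g * s : Γ).1 = Real.log (sl2OpNorm (g.1.1 * s.1.1)) -
        Real.log (sl2OpNorm (g.1.2 * s.1.2)) := rfl
      rw [e, cdiff, abs_le]; constructor <;> linarith⟩)
    (fun s => ⟨Real.log (sl2OpNorm s.1.1) + Real.log (sl2OpNorm s.1.2), fun g => by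
      have h1 := abs_le.mp (log_left g.1.1 s.1.1)
      have h2 := abs_le.mp (log_left g.1.2 s.1.2)
      have e : cdiff (s * g : Γ).1 = Real.log (sl2OpNorm (s.1.1 * g.1.1)) -
        Real.log (sl2OpNorm (s.1.2 * g.1.2)) := rfl
      rw [e, cdiff, abs_le]; constructor <;> linarith⟩)
    (fun g => by
      have e : cdiff (g⁻¹ : Γ).1 = Real.log (sl2OpNorm (g.1.1⁻¹)) -
        Real.log (sl2OpNorm (g.1.2⁻¹)) := rfl
      rw [e, N_inv, N_inv, cdiff])
    (fun g hg => Subtype.ext (htf g.1 g.2 (Γ.subtype.isOfFinOrder hg)))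
  rcases key with hk | hk
  · left
    intro R
    refine (hk.union (hfin R)).subset fun γ hγ => ?_
    rcases le_total (cdiff γ.1) 0 with h0 | h0
    · exact Or.inl h0
    · right
      change |cdiff γ.1| ≤ R
      rw [abs_of_nonneg h0]; exact hγ
  · right
    intro R
    refine (hk.union (hfin R)).subset fun γ hγ => ?_
    rcases le_total 0 (cdiff γ.1) with h0 | h0
    · exact Or.inl h0
    · right
      change |cdiff γ.1| ≤ R
      rw [abs_of_nonpos h0]; exact hγ

theorem stmt_0_fwd (Γ : Subgroup (SL2R × SL2R))
    (htf : ∀ g ∈ Γ, IsOfFinOrder g → g = 1)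
    (h : ∀ K L : Set SL2R, IsCompact K → IsCompact L →
      {γ : Γ | ((fun g => (γ : SL2R × SL2R).1 * g * ((γ : SL2R × SL2R).2)⁻¹) '' K ∩ L).Nonempty}.Finite) :
    ∃ doSwap : Bool, ∃ Γ₀ : Subgroup SL2R, ∃ φ : Γ₀ →* SL2R,
      DiscreteTopology Γ₀ ∧
      (if doSwap then Prod.swap '' (Γ : Set (SL2R × SL2R)) else (Γ : Set (SL2R × SL2R)))
        = {x : SL2R × SL2R | ∃ γ : Γ₀, x = ((γ : SL2R), φ γ)} ∧
      ∀ C : ℝ, 0 < C →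
        {γ : Γ₀ | ¬ C * sl2OpNorm (φ γ) < sl2OpNorm (γ : SL2R)}.Finite := by
  rcases forward Γ htf h with hf | hf
  · refine ⟨false, ?_⟩
    simp only [Bool.false_eq_true, if_false]
    apply graph_of Γ htf
    intro C hC
    simp only [cdiff_le_iff _ C hC]
    exact hf _
  · refine ⟨true, ?_⟩
    simp only [if_true]
    let σ : SL2R × SL2R ≃* SL2R × SL2R := MulEquiv.prodComm
    have hσ : ∀ x, σ x = x.swap := fun x => rfl
    have hcoe : Prod.swap '' (Γ : Set (SL2R × SL2R)) =
        ((Γ.map σ.toMonoidHom : Subgroup (SL2R × SL2R)) : Set (SL2R × SL2R)) := rfl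
    rw [hcoe]
    apply graph_of
    · rintro _ ⟨g, hg, rfl⟩ hfo
      have : IsOfFinOrder g := by
        have h3 := σ.symm.toMonoidHom.isOfFinOrder hfo
        simpa using h3
      rw [htf g hg this, map_one]
    · intro C hC
      simp only [cdiff_le_iff _ C hC]
      refine ((hf (Real.log C)).image
        (fun γ : Γ => (⟨σ γ.1, ⟨γ.1, γ.2, rfl⟩⟩ : Γ.map σ.toMonoidHom))).subset ?_
      rintro ⟨_, ⟨g, hg, rfl⟩⟩ hγ
      refine ⟨⟨g, hg⟩, ?_, rfl⟩
      change - cdiff g ≤ Real.log C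
      rw [← cdiff_swap]
      exact hγ

theorem stmt_0_bwd (Γ : Subgroup (SL2R × SL2R))
    (h : ∃ doSwap : Bool, ∃ Γ₀ : Subgroup SL2R, ∃ φ : Γ₀ →* SL2R,
      DiscreteTopology Γ₀ ∧
      (if doSwap then Prod.swap '' (Γ : Set (SL2R × SL2R)) else (Γ : Set (SL2R × SL2R)))
        = {x : SL2R × SL2R | ∃ γ : Γ₀, x = ((γ : SL2R), φ γ)} ∧
      ∀ C : ℝ, 0 < C →
        {γ : Γ₀ | ¬ C * sl2OpNorm (φ γ) < sl2OpNorm (γ : SL2R)}.Finite)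
    (K L : Set SL2R) (hK : IsCompact K) (hL : IsCompact L) :
      {γ : Γ | ((fun g => (γ : SL2R × SL2R).1 * g * ((γ : SL2R × SL2R).2)⁻¹) '' K ∩ L).Nonempty}.Finite := by
  obtain ⟨CK, hCK, hCK'⟩ := N_bdd hK
  obtain ⟨CL, hCL, hCL'⟩ := N_bdd hL
  obtain ⟨sw, Γ₀, φ, -, hgr, hfin⟩ := h
  have hF := hfin (CK * CL) (mul_pos hCK hCL)
  apply Set.Finite.of_finite_image (f := Subtype.val) _ Subtype.val_injective.injOn
  cases sw
  · simp only [Bool.false_eq_true, if_false] at hgr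
    refine (hF.image (fun γ : Γ₀ => ((γ : SL2R), φ γ))).subset ?_
    rintro _ ⟨⟨x, hx⟩, ⟨_, ⟨g, hg, rfl⟩, hgL⟩, rfl⟩
    have hx' : x ∈ (Γ : Set (SL2R × SL2R)) := hx
    rw [hgr] at hx'
    obtain ⟨γ, rfl⟩ := hx'
    refine ⟨γ, ?_, rfl⟩
    apply not_lt.mpr
    have h1 := hCL' _ hgL
    have h2 := hCK' _ hg
    dsimp only at h1
    set m := (γ : SL2R) * g * (φ γ)⁻¹ with hm
    have e : (γ : SL2R) = m * φ γ * g⁻¹ := by rw [hm]; group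
    calc sl2OpNorm (γ : SL2R) = sl2OpNorm (m * φ γ * g⁻¹) := by rw [← e]
      _ ≤ sl2OpNorm m * sl2OpNorm (φ γ) * sl2OpNorm g := by
        refine (N_mul_le _ _).trans ?_
        rw [N_inv]
        exact mul_le_mul_of_nonneg_right (N_mul_le _ _) (N_nonneg _)
      _ ≤ CL * sl2OpNorm (φ γ) * CK :=
        mul_le_mul (mul_le_mul_of_nonneg_right h1 (N_nonneg _)) h2 (N_nonneg _)
          (mul_nonneg hCL.le (N_nonneg _))
      _ = CK * CL * sl2OpNorm (φ γ) := by ring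
  · simp only [if_true] at hgr
    refine (hF.image (fun γ : Γ₀ => (φ γ, (γ : SL2R)))).subset ?_
    rintro _ ⟨⟨x, hx⟩, ⟨_, ⟨g, hg, rfl⟩, hgL⟩, rfl⟩
    have hx' : x.swap ∈ Prod.swap '' (Γ : Set (SL2R × SL2R)) := ⟨x, hx, rfl⟩
    rw [hgr] at hx'
    obtain ⟨γ, hγ⟩ := hx'
    have hxe : x = (φ γ, (γ : SL2R)) := by rw [← Prod.swap_swap x, hγ]; rfl
    subst hxe
    refine ⟨γ, ?_, rfl⟩
    apply not_lt.mpr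
    have h1 := hCL' _ hgL
    have h2 := hCK' _ hg
    dsimp only at h1
    set m := φ γ * g * (γ : SL2R)⁻¹ with hm
    have e : (γ : SL2R) = m⁻¹ * φ γ * g := by rw [hm]; group
    calc sl2OpNorm (γ : SL2R) = sl2OpNorm (m⁻¹ * φ γ * g) := by rw [← e]
      _ ≤ sl2OpNorm m * sl2OpNorm (φ γ) * sl2OpNorm g := by
        refine (N_mul_le _ _).trans ?_
        rw [← N_inv m]
        exact mul_le_mul_of_nonneg_right (N_mul_le _ _) (N_nonneg _)
      _ ≤ CL * sl2OpNorm (φ γ) * CK :=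
        mul_le_mul (mul_le_mul_of_nonneg_right h1 (N_nonneg _)) h2 (N_nonneg _)
          (mul_nonneg hCL.le (N_nonneg _))
      _ = CK * CL * sl2OpNorm (φ γ) := by ring

theorem stmt_0 (Γ : Subgroup (SL2R × SL2R))
    (hdiscrete : DiscreteTopology Γ)
    (htorsionfree : ∀ g ∈ Γ, IsOfFinOrder g → g = 1) :
    -- Γ acts properly discontinuously on SL₂(ℝ) by (γ₁,γ₂)·g = γ₁gγ₂⁻¹ :
    (∀ K L : Set SL2R, IsCompact K → IsCompact L →
      {γ : Γ | ((fun g => (γ : SL2R × SL2R).1 * g * ((γ : SL2R × SL2R).2)⁻¹) '' K ∩ L).Nonempty}.Finite)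
    ↔
    -- iff, possibly after swapping the two factors, Γ is a graph:
    ∃ doSwap : Bool, ∃ Γ₀ : Subgroup SL2R, ∃ φ : Γ₀ →* SL2R,
      DiscreteTopology Γ₀ ∧
      (if doSwap then Prod.swap '' (Γ : Set (SL2R × SL2R)) else (Γ : Set (SL2R × SL2R)))
        = {x : SL2R × SL2R | ∃ γ : Γ₀, x = ((γ : SL2R), φ γ)} ∧
      ∀ C : ℝ, 0 < C →
        {γ : Γ₀ | ¬ C * sl2OpNorm (φ γ) < sl2OpNorm (γ : SL2R)}.Finite := by
  exact ⟨stmt_0_fwd Γ htorsionfree, fun h K L hK hL => stmt_0_bwd Γ h K L hK hL⟩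
end

section
/- Let p be a prime, n ≥ 1 an integer, and K a finite field extension of ℚ_p (i.e., a field equipped with a ℚ_p-algebra structure making it finite-dimensional over ℚ_p). Then every torsion subgroup of GL_n(K) is finite. -/
theorem aux_tf (p : ℕ) [Fact p.Prime] {A : Type*} [CommRing A] [Algebra ℤ_[p] A]
    [Module.Finite ℤ_[p] A] [Module.IsTorsionFree ℤ_[p] A] (a : A) (q : ℕ) (hq : q.Prime)
    (h : (1 + (p : A) ^ 2 * a) ^ q = 1) : a = 0 := by
  have hp0 : (p : ℤ_[p]) ≠ 0 := by exact_mod_cast (Fact.out : p.Prime).ne_zero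
  have hcan : ∀ x : A, (p : A) * x = 0 → x = 0 := by
    intro x hx
    have : (p : ℤ_[p]) • x = 0 := by rw [Algebra.smul_def, map_natCast]; exact hx
    exact (smul_eq_zero.mp this).resolve_left hp0
  obtain ⟨k, hk⟩ := Polynomial.powAddExpansion (1 : A) ((p : A) ^ 2 * a) q
  rw [h] at hk
  have h1 : (q : A) * a + k * (p : A) ^ 2 * a ^ 2 = 0 := by
    apply hcan; apply hcan
    simp only [one_pow, mul_one] at hk
    linear_combination -hk
  have key : ∃ b : A, a = (p : A) * (b * a) := by
    by_cases hqp : q = p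
    · subst hqp
      refine ⟨-(k * a), ?_⟩
      rw [← sub_eq_zero]
      apply hcan
      linear_combination h1
    · have hu : IsUnit (q : ℤ_[p]) := by
        rw [PadicInt.isUnit_iff, PadicInt.norm_natCast_eq_one_iff]
        exact (Nat.coprime_primes (Fact.out : p.Prime) hq).mpr (Ne.symm hqp)
      obtain ⟨c, hc⟩ := hu.exists_left_inv
      have hc' : algebraMap ℤ_[p] A c * (q : A) = 1 := by
        rw [← map_natCast (algebraMap ℤ_[p] A), ← map_mul, hc, map_one]
      refine ⟨-(algebraMap ℤ_[p] A c * k * p * a), ?_⟩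
      linear_combination (algebraMap ℤ_[p] A c) * h1 - a * hc'
  obtain ⟨b, hb⟩ := key
  let N : Submodule ℤ_[p] A := (Ideal.span {a}).restrictScalars ℤ_[p]
  have hN : N = ⊥ := by
    apply Submodule.eq_bot_of_le_smul_of_le_jacobson_bot (IsLocalRing.maximalIdeal ℤ_[p]) N
      (IsNoetherian.noetherian N)
    · intro x hx
      obtain ⟨y, rfl⟩ := Ideal.mem_span_singleton'.mp (show x ∈ Ideal.span {a} from hx)
      have : y * a = (p : ℤ_[p]) • ((y * b) * a) := by
        rw [Algebra.smul_def, map_natCast]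
        linear_combination y * hb
      rw [this]
      refine Submodule.smul_mem_smul ?_ ?_
      · rw [PadicInt.maximalIdeal_eq_span_p]; exact Ideal.mem_span_singleton_self _
      · exact Ideal.mem_span_singleton'.mpr ⟨_, rfl⟩
    · exact IsLocalRing.maximalIdeal_le_jacobson _
  have : a ∈ N := Ideal.mem_span_singleton_self a
  rw [hN] at this
  exact this

theorem aux_tors (p : ℕ) [Fact p.Prime] {A : Type*} [CommRing A] [Algebra ℤ_[p] A]
    [Module.Finite ℤ_[p] A] [Module.IsTorsionFree ℤ_[p] A] (u a : A)
    (hu : u = 1 + (p : A) ^ 2 * a) (hfin : IsOfFinOrder u) : u = 1 := by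
  by_contra hne
  have ho : orderOf u ≠ 1 := fun h => hne (orderOf_eq_one_iff.mp h)
  obtain ⟨q, hq, d, hd⟩ := Nat.exists_prime_and_dvd ho
  have hpos := hfin.orderOf_pos
  have hdpos : 0 < d := by
    rcases Nat.eq_zero_or_pos d with h | h
    · subst h; omega
    · exact h
  have hdvd : (p : A) ^ 2 * a ∣ u ^ d - 1 := by
    have := sub_dvd_pow_sub_pow u 1 d
    rw [one_pow] at this
    rwa [hu, add_sub_cancel_left, ← hu] at this
  obtain ⟨b, hb⟩ := hdvd
  have h1 : u ^ d = 1 + (p : A) ^ 2 * (a * b) := by linear_combination hb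
  have h2 : (1 + (p : A) ^ 2 * (a * b)) ^ q = 1 := by
    rw [← h1, ← pow_mul, mul_comm, ← hd, pow_orderOf_eq_one]
  have h3 := aux_tf p (a * b) q hq h2
  rw [h3, mul_zero, add_zero] at h1
  have h4 := orderOf_dvd_of_pow_eq_one h1
  have h5 := Nat.le_of_dvd hdpos h4
  have := hq.two_le
  nlinarith

theorem aux_exp (p : ℕ) [Fact p.Prime] {E : Type*} [Ring E] [Algebra ℚ_[p] E]
    [FiniteDimensional ℚ_[p] E] :
    ∃ m : ℕ, 0 < m ∧ ∀ g : E, IsOfFinOrder g → g ^ m = 1 := by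
  letI : Algebra ℤ_[p] E := Algebra.compHom E (algebraMap ℤ_[p] ℚ_[p])
  haveI : IsScalarTower ℤ_[p] ℚ_[p] E := IsScalarTower.of_algebraMap_eq' rfl
  have hp := (Fact.out : p.Prime)
  refine ⟨((p ^ 2) ^ Module.finrank ℚ_[p] E).factorial, Nat.factorial_pos _, fun g hg => ?_⟩
  have hint : IsIntegral ℤ_[p] g := by
    obtain ⟨m, hm, h⟩ := isOfFinOrder_iff_pow_eq_one.mp hg
    refine IsIntegral.of_pow hm ?_
    rw [h]; exact isIntegral_one
  let A := Algebra.adjoin ℤ_[p] {g}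
  letI : CommRing A := Algebra.adjoinCommRingOfComm ℤ_[p] (by
    intro x hx y hy
    simp only [Set.mem_singleton_iff] at hx hy
    rw [hx, hy])
  haveI : Module.Finite ℤ_[p] A := Module.Finite.of_fg hint.fg_adjoin_singleton
  haveI : Module.IsTorsionFree ℤ_[p] E := Module.IsTorsionFree.trans_faithfulSMul ℤ_[p] ℚ_[p] E
  haveI : Module.IsTorsionFree ℤ_[p] A := inferInstance
  haveI : Module.Free ℤ_[p] A := Module.free_of_finite_type_torsion_free'
  let b := Module.finBasis ℤ_[p] A
  set d := Module.finrank ℤ_[p] A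
  have hd : d ≤ Module.finrank ℚ_[p] E := by
    have hli : LinearIndependent ℤ_[p] (fun i => (b i : E)) :=
      b.linearIndependent.map' A.val.toLinearMap (LinearMap.ker_eq_bot.mpr Subtype.val_injective)
    rw [LinearIndependent.iff_fractionRing ℤ_[p] ℚ_[p]] at hli
    simpa using hli.fintype_card_le_finrank
  let g' : A := ⟨g, Algebra.self_mem_adjoin_singleton _ _⟩
  have hg' : IsOfFinOrder g' := by
    obtain ⟨m, hm, h⟩ := isOfFinOrder_iff_pow_eq_one.mp hg
    exact isOfFinOrder_iff_pow_eq_one.mpr ⟨m, hm, Subtype.ext h⟩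
  haveI : NeZero (p ^ 2) := ⟨pow_ne_zero _ hp.ne_zero⟩
  let F : Fin ((p ^ 2) ^ d + 1) → (Fin d → ZMod (p ^ 2)) :=
    fun k i => PadicInt.toZModPow 2 (b.repr (g' ^ (k : ℕ)) i)
  have hF : ∃ i j : Fin ((p ^ 2) ^ d + 1), i < j ∧ F i = F j := by
    obtain ⟨i, j, hij, h⟩ := Fintype.exists_ne_map_eq_of_card_lt F (by simp [ZMod.card])
    rcases lt_or_gt_of_ne hij with h' | h'
    · exact ⟨i, j, h', h⟩
    · exact ⟨j, i, h', h.symm⟩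
  obtain ⟨i, j, hij, h⟩ := hF
  have hcong : ∃ a : A, g' ^ (j : ℕ) - g' ^ (i : ℕ) = (p : A) ^ 2 * a := by
    have hc : ∀ l, ∃ c : ℤ_[p], b.repr (g' ^ (j : ℕ) - g' ^ (i : ℕ)) l = (p : ℤ_[p]) ^ 2 * c := by
      intro l
      have h1 := congrFun h l
      have h2 : b.repr (g' ^ (j : ℕ) - g' ^ (i : ℕ)) l ∈ RingHom.ker (PadicInt.toZModPow (p := p) 2) := by
        rw [RingHom.mem_ker, map_sub, Finsupp.sub_apply, map_sub, sub_eq_zero]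
        exact h1.symm
      rw [PadicInt.ker_toZModPow] at h2
      exact Ideal.mem_span_singleton.mp h2
    choose c hc using hc
    refine ⟨∑ l, c l • b l, ?_⟩
    rw [← b.sum_repr (g' ^ (j : ℕ) - g' ^ (i : ℕ)), Finset.mul_sum]
    refine Finset.sum_congr rfl fun l _ => ?_
    rw [hc, mul_smul, Algebra.smul_def ((p : ℤ_[p]) ^ 2), map_pow, map_natCast]
  obtain ⟨a, ha⟩ := hcong
  obtain ⟨s, hs⟩ := hg'.isUnit.pow (i : ℕ) |>.exists_left_inv
  have hsplit : g' ^ (j : ℕ) = g' ^ ((j : ℕ) - i) * g' ^ (i : ℕ) := by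
    rw [← pow_add, Nat.sub_add_cancel (le_of_lt hij)]
  have hone : g' ^ ((j : ℕ) - i) = 1 := by
    apply aux_tors p _ (s * a) _ hg'.pow
    rw [hsplit] at ha
    linear_combination s * ha - (g' ^ ((j : ℕ) - i) - 1) * hs
  have hone' : g ^ ((j : ℕ) - i) = 1 := congrArg Subtype.val hone
  have hle : (j : ℕ) - i ≤ (p ^ 2) ^ Module.finrank ℚ_[p] E := by
    have := j.2
    have : (p ^ 2) ^ d ≤ (p ^ 2) ^ Module.finrank ℚ_[p] E :=
      Nat.pow_le_pow_right (Nat.pos_of_ne_zero (NeZero.ne _)) hd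
    omega
  have hlt : (i : ℕ) < j := hij
  obtain ⟨t, ht⟩ := Nat.dvd_factorial (show 0 < (j : ℕ) - i by omega) hle
  rw [ht, pow_mul, hone', one_pow]

theorem aux_trace {K : Type*} [Field K] (n : ℕ) (hn : 1 ≤ n) (m : ℕ) (hm : 0 < m) :
    {t : K | ∃ g : Matrix (Fin n) (Fin n) K, g ^ m = 1 ∧ g.trace = t}.Finite := by
  classical
  haveI : Nonempty (Fin n) := ⟨⟨0, hn⟩⟩
  let L := AlgebraicClosure K
  let R : Multiset L := n • (Polynomial.nthRoots m (1 : L)).dedup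
  have hfin : ((fun s : Multiset L => s.sum) '' (Set.Iic R)).Finite := (Set.finite_Iic R).image _
  refine Set.Finite.subset (hfin.preimage (f := algebraMap K L) (algebraMap K L).injective.injOn) ?_
  rintro t ⟨g, hg, rfl⟩
  let G : Matrix (Fin n) (Fin n) L := g.map (algebraMap K L)
  have hG : G ^ m = 1 := by
    change (algebraMap K L).mapMatrix g ^ m = 1
    rw [← map_pow, hg, map_one]
  refine ⟨G.charpoly.roots, ?_, ?_⟩
  · rw [Set.mem_Iic, Multiset.le_iff_count]
    intro r
    by_cases hr : r ∈ G.charpoly.roots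
    · have h1 : r ^ m = 1 := by
        have h2 := Matrix.mem_spectrum_iff_isRoot_charpoly.mpr (Polynomial.isRoot_of_mem_roots hr)
        have h3 := spectrum.pow_mem_pow G m h2
        rw [hG, spectrum.one_eq] at h3
        exact h3
      have h4 : r ∈ (Polynomial.nthRoots m (1 : L)).dedup := by
        rw [Multiset.mem_dedup, Polynomial.mem_nthRoots hm]; exact h1
      rw [Multiset.count_nsmul, Multiset.count_eq_one_of_mem (Multiset.nodup_dedup _) h4, mul_one]
      refine (Multiset.count_le_card _ _).trans ((Polynomial.card_roots' _).trans ?_)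
      simp [Matrix.charpoly_natDegree_eq_dim]
    · rw [Multiset.count_eq_zero_of_notMem hr]; exact Nat.zero_le _
  · change G.charpoly.roots.sum = _
    rw [← Matrix.trace_eq_sum_roots_charpoly]
    exact (AddMonoidHom.map_trace (algebraMap K L) g).symm

theorem aux_unip {K : Type*} [Field K] [CharZero K] (n : ℕ) (m : ℕ) (hm : 0 < m)
    (u : Matrix (Fin n) (Fin n) K) (hu : u ^ m = 1)
    (ht : ∀ k : ℕ, (u ^ k).trace = n) : u = 1 := by
  have hm0 : (m : K) ≠ 0 := by exact_mod_cast hm.ne'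
  let S : Matrix (Fin n) (Fin n) K := ∑ k ∈ Finset.range m, u ^ k
  have h1 : u * S = S := by
    have := mul_geom_sum u m
    rw [hu, sub_self, sub_mul, one_mul, sub_eq_zero] at this
    exact this
  have h2 : ∀ k, u ^ k * S = S := by
    intro k
    induction k with
    | zero => simp
    | succ k ih => rw [pow_succ, mul_assoc, h1, ih]
  have h3 : S * S = (m : K) • S := by
    conv_lhs => lhs; unfold S
    rw [Finset.sum_mul, Finset.sum_congr rfl (fun k _ => h2 k)]
    simp [Nat.cast_smul_eq_nsmul]
  let e := (m : K)⁻¹ • S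
  have he : IsIdempotentElem e := by
    change ((m : K)⁻¹ • S) * ((m : K)⁻¹ • S) = (m : K)⁻¹ • S
    rw [smul_mul_smul_comm, h3, smul_smul]
    congr 1
    field_simp
  have hte : e.trace = n := by
    simp only [e, S, Matrix.trace_smul, Matrix.trace_sum, ht]
    simp [hm0]
  have hf : 1 - e = 0 := by
    have h4 : IsIdempotentElem (Matrix.toLin' (1 - e)) := by
      have := he.one_sub
      unfold IsIdempotentElem at this ⊢
      rw [Module.End.mul_eq_comp, ← Matrix.toLin'_mul, this]
    have h5 := (LinearMap.IsIdempotentElem.trace_eq_zero_iff h4).mp (by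
      rw [Matrix.trace_toLin'_eq, Matrix.trace_sub, hte]; simp)
    exact (LinearEquiv.map_eq_zero_iff _).mp h5
  have he1 : e = 1 := (sub_eq_zero.mp hf).symm
  calc u = u * e := by rw [he1, mul_one]
    _ = e := by simp only [e, mul_smul_comm, h1]
    _ = 1 := he1

theorem stmt_13 (p : ℕ) [Fact p.Prime] (n : ℕ) (hn : 1 ≤ n)
    (K : Type*) [Field K] [Algebra ℚ_[p] K] [FiniteDimensional ℚ_[p] K]
    (Γ : Subgroup (GL (Fin n) K))
    (htorsion : ∀ g ∈ Γ, IsOfFinOrder g) :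
    (Γ : Set (GL (Fin n) K)).Finite := by
  haveI : CharZero K := charZero_of_injective_algebraMap (algebraMap ℚ_[p] K).injective
  obtain ⟨m, hm, hexp⟩ := aux_exp p (E := Matrix (Fin n) (Fin n) K)
  have hpow : ∀ g ∈ Γ, (g : Matrix (Fin n) (Fin n) K) ^ m = 1 := fun g hg =>
    hexp _ ((Units.coeHom _).isOfFinOrder (htorsion g hg))
  -- a finite subset of the group with the same span
  let c : GL (Fin n) K → Matrix (Fin n) (Fin n) K := fun g => g
  obtain ⟨T, hTsub, hTspan⟩ := (Submodule.fg_span_iff_fg_span_finset_subset (R := K) (c '' Γ)).mp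
    (IsNoetherian.noetherian _)
  have hT : ∀ x ∈ T, ∃ g ∈ Γ, c g = x := fun x hx => hTsub hx
  let Φ : GL (Fin n) K → (T → K) := fun g x => (c g * x).trace
  have hfin : (Set.univ.pi (fun _ : T =>
      {t : K | ∃ g : Matrix (Fin n) (Fin n) K, g ^ m = 1 ∧ g.trace = t})).Finite :=
    Set.Finite.pi' (fun _ => aux_trace n hn m hm) |>.subset (fun f hf i => hf i trivial)
  refine Set.Finite.of_finite_image (f := Φ) (hfin.subset ?_) ?_
  · rintro _ ⟨g, hg, rfl⟩ x -
    obtain ⟨h, hh, hx⟩ := hT x x.2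
    refine ⟨c (g * h), hpow _ (Γ.mul_mem hg hh), ?_⟩
    simp only [Φ, ← hx, c, Units.val_mul]
  · intro g hg h hh hgh
    have hall : ∀ x ∈ Submodule.span K (c '' Γ), (c g * x).trace = (c h * x).trace := by
      intro x hx
      rw [hTspan] at hx
      induction hx using Submodule.span_induction with
      | mem x hx => exact congrFun hgh ⟨x, hx⟩
      | zero => simp
      | add x y _ _ hx hy => rw [mul_add, mul_add, Matrix.trace_add, Matrix.trace_add, hx, hy]
      | smul a x _ hx => rw [mul_smul_comm, mul_smul_comm, Matrix.trace_smul, Matrix.trace_smul, hx]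
    have hu : h⁻¹ * g ∈ Γ := Γ.mul_mem (Γ.inv_mem hh) hg
    have hstep : ∀ k : ℕ, (c (h⁻¹ * g) ^ k).trace = n := by
      intro k
      induction k with
      | zero => simp
      | succ k ih =>
        have h1 := hall (c ((h⁻¹ * g) ^ k * h⁻¹))
          (Submodule.subset_span ⟨_, Γ.mul_mem (Γ.pow_mem hu k) (Γ.inv_mem hh), rfl⟩)
        rw [Matrix.trace_mul_comm, Matrix.trace_mul_comm (c h)] at h1
        have e1 : c ((h⁻¹ * g) ^ k * h⁻¹) * c g = c (h⁻¹ * g) ^ (k + 1) := by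
          simp only [c, ← Units.val_mul, ← Units.val_pow_eq_pow_val]
          rw [pow_succ, mul_assoc]
        have e2 : c ((h⁻¹ * g) ^ k * h⁻¹) * c h = c (h⁻¹ * g) ^ k := by
          simp only [c, ← Units.val_mul, ← Units.val_pow_eq_pow_val]
          rw [inv_mul_cancel_right]
        rw [e1, e2] at h1
        rw [h1, ih]
    have := aux_unip n m hm _ (hpow _ hu) hstep
    have h2 : h⁻¹ * g = 1 := Units.ext this
    exact (inv_mul_eq_one.mp h2).symm
end

section
/- For every n ≥ 1, every discrete torsion subgroup of GL_n(ℂ) is finite. -/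
lemma aux_int_jacobson : IsJacobsonRing ℤ := by
  rw [isJacobsonRing_iff_prime_eq]
  intro P hP
  by_cases h : P = ⊥
  · subst h
    refine le_antisymm ?_ Ideal.le_jacobson
    intro x hx
    have := (Ideal.mem_jacobson_bot.1 hx) x
    rw [Int.isUnit_iff] at this
    have : x = 0 := by
      rcases this with h | h
      · simpa using h
      · nlinarith [mul_self_nonneg x]
    simpa using this
  · have : P.IsMaximal := hP.isMaximal h
    exact Ideal.jacobson_eq_self_of_isMaximal

lemma aux_finite_field (K : Type*) [Field K] [Algebra.FiniteType ℤ K] :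
    ringChar K ≠ 0 ∧ Finite K := by
  have := aux_int_jacobson
  have : Module.Finite ℤ K := finite_of_finite_type_of_isJacobsonRing ℤ K
  have h0 : ringChar K ≠ 0 := by
    intro h
    have : CharP K 0 := h ▸ ringChar.charP K
    have : CharZero K := CharP.charP_to_charZero K
    have hinj : Function.Injective (algebraMap ℤ K) := by
      intro a b hab
      simpa using hab
    exact Int.not_isField (isField_of_isIntegral_of_isField hinj (Field.toIsField K))
  refine ⟨h0, Module.finite_of_fg_torsion K ?_⟩
  intro x
  refine ⟨⟨(ringChar K : ℤ), mem_nonZeroDivisors_of_ne_zero (by exact_mod_cast h0)⟩, ?_⟩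
  change ((ringChar K : ℤ)) • x = 0
  rw [zsmul_eq_mul]
  simp

lemma aux_finite_field' {S K : Type*} [CommRing S] [Algebra ℤ S] [Field K]
    (h : Algebra.FiniteType ℤ S) (f : S →+* K) (hf : Function.Surjective f) :
    ringChar K ≠ 0 ∧ Finite K := by
  have : Algebra.FiniteType ℤ K := 
    Algebra.FiniteType.of_surjective
      ({ f with commutes' := fun r => by simp } : S →ₐ[ℤ] K) hf
  exact aux_finite_field K

lemma aux_torsion {S : Type*} [CommRing S] [IsDomain S] {n : ℕ} (I : Ideal S) [I.IsPrime]
    (G : Matrix (Fin n) (Fin n) S) (q : ℕ) (hG : G ^ q = 1)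
    (hI : (Ideal.Quotient.mk I).mapMatrix G = 1) (hq : (q : S) ∉ I) : G = 1 := by
  have h1 : (G - 1) * ∑ i ∈ Finset.range q, G ^ i = 0 := by
    rw [mul_geom_sum, hG, sub_self]
  set D := ∑ i ∈ Finset.range q, G ^ i with hD
  have h2 : (Ideal.Quotient.mk I).mapMatrix D = (q : Matrix (Fin n) (Fin n) (S ⧸ I)) := by
    rw [hD, map_sum]
    simp only [map_pow, hI]
    simp
  have h3 : Ideal.Quotient.mk I D.det = (q : S ⧸ I) ^ n := by
    rw [RingHom.map_det, h2, ← Matrix.diagonal_natCast, Matrix.det_diagonal]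
    simp
  have h4 : D.det ≠ 0 := by
    intro h
    rw [h, map_zero] at h3
    have h5 : (q : S ⧸ I) = 0 := by
      by_contra hne
      exact pow_ne_zero n hne h3.symm
    apply hq
    rw [← Ideal.Quotient.eq_zero_iff_mem]
    simpa using h5
  have h6 : (G - 1) * (D * D.adjugate) = 0 := by
    rw [← mul_assoc, h1, zero_mul]
  rw [Matrix.mul_adjugate, Matrix.mul_smul, mul_one] at h6
  have := (smul_eq_zero.1 h6).resolve_left h4
  exact sub_eq_zero.1 this

lemma aux_hom {n : ℕ} (H : Subgroup (GL (Fin n) ℂ)) (S : Subalgebra ℤ ℂ)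
    (hmem : ∀ h ∈ H, ∀ i j, (h : Matrix (Fin n) (Fin n) ℂ) i j ∈ S)
    (I : Ideal S) [I.IsPrime] :
    ∃ ψ : H →* Matrix (Fin n) (Fin n) (S ⧸ I),
      ∀ h : H, h ≠ 1 → ψ h = 1 → ∀ q : ℕ, h ^ q = 1 → (q : S) ∈ I := by
  let φ : H →* Matrix (Fin n) (Fin n) S :=
    { toFun := fun h => Matrix.of fun i j => ⟨(h : GL (Fin n) ℂ) i j, hmem _ h.2 i j⟩
      map_one' := by
        ext i j
        simp [Matrix.one_apply]
        split_ifs <;> simp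
      map_mul' := by
        intro a b
        ext i j
        simp [Matrix.mul_apply] }
  have hφ : Function.Injective φ := by
    intro a b hab
    ext i j
    have := congrArg (fun M : Matrix (Fin n) (Fin n) S => ((M i j : S) : ℂ)) hab
    exact this
  refine ⟨(RingHom.toMonoidHom (Ideal.Quotient.mk I).mapMatrix).comp φ, ?_⟩
  intro h hne h1 q hq
  by_contra hqI
  apply hne
  apply hφ
  rw [map_one]
  refine aux_torsion I (φ h) q ?_ h1 hqI
  rw [← map_pow, hq, map_one]

lemma aux_schur {n : ℕ} (H : Subgroup (GL (Fin n) ℂ)) (T : Finset ℂ)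
    (hmem : ∀ h ∈ H, ∀ i j, (h : Matrix (Fin n) (Fin n) ℂ) i j ∈ Algebra.adjoin ℤ (T : Set ℂ))
    (htor : ∀ h ∈ H, IsOfFinOrder h) : Finite H := by
  classical
  have key : ∀ S : Subalgebra ℤ ℂ, S.FG → ∃ I : Ideal S, I.IsMaximal ∧
      Finite (S ⧸ I) ∧ ringChar (S ⧸ I) ≠ 0 := by
    intro S hS
    obtain ⟨I, hI⟩ := Ideal.exists_maximal S
    have hft : Algebra.FiniteType ℤ S := (Subalgebra.fg_iff_finiteType S).1 hS
    let _ := Ideal.Quotient.field I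
    obtain ⟨h1, h2⟩ := aux_finite_field' hft (Ideal.Quotient.mk I) Ideal.Quotient.mk_surjective
    exact ⟨I, hI, h2, h1⟩
  obtain ⟨I, hI, hfin, hchar⟩ := key _ (Subalgebra.fg_adjoin_finset T)
  set p := ringChar (Algebra.adjoin ℤ (T : Set ℂ) ⧸ I) with hp
  let T' : Finset ℂ := insert ((p : ℂ)⁻¹) T
  obtain ⟨I', hI', hfin', hchar'⟩ := key _ (Subalgebra.fg_adjoin_finset T')
  have hle : Algebra.adjoin ℤ (T : Set ℂ) ≤ Algebra.adjoin ℤ (T' : Set ℂ) :=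
    Algebra.adjoin_mono (by simp [T'])
  have hpI' : ((p : ℕ) : Algebra.adjoin ℤ (T' : Set ℂ)) ∉ I' := by
    intro hmemp
    have hinv : (p : ℂ)⁻¹ ∈ Algebra.adjoin ℤ (T' : Set ℂ) :=
      Algebra.subset_adjoin (by simp [T'])
    have h1 : (⟨(p : ℂ)⁻¹, hinv⟩ : Algebra.adjoin ℤ (T' : Set ℂ)) * (p : ℕ) = 1 := by
      apply Subtype.ext
      have : (p : ℂ) ≠ 0 := by exact_mod_cast hchar
      simp [this]
    have h2 := I'.mul_mem_left ⟨(p : ℂ)⁻¹, hinv⟩ hmemp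
    rw [h1] at h2
    exact hI'.ne_top ((Ideal.eq_top_iff_one _).2 h2)
  obtain ⟨ψ, hψ⟩ := aux_hom H _ hmem I
  obtain ⟨ψ', hψ'⟩ := aux_hom H _ (fun h hh i j => hle (hmem h hh i j)) I'
  have hinj : Function.Injective (ψ.prod ψ') := by
    rw [injective_iff_map_eq_one]
    intro h hh
    have e1 : ψ h = 1 := congrArg Prod.fst hh
    have e2 : ψ' h = 1 := congrArg Prod.snd hh
    by_contra hne
    have hfo : IsOfFinOrder h := by
      have := htor h h.2
      exact Submonoid.isOfFinOrder_coe.1 this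
    have hord : orderOf h ≠ 1 := by simpa using hne
    obtain ⟨q, hq, hqd⟩ := Nat.exists_prime_and_dvd hord
    obtain ⟨m, hm⟩ := hqd
    have hpos := hfo.orderOf_pos
    have hg1 : h ^ m ≠ 1 := by
      intro hc
      have := orderOf_dvd_of_pow_eq_one hc
      have hm0 : 0 < m := by
        rcases Nat.eq_zero_or_pos m with h0 | h0
        · rw [h0, mul_zero] at hm; omega
        · exact h0
      have := Nat.le_of_dvd hm0 this
      have := hq.two_le
      nlinarith
    have hg2 : (h ^ m) ^ q = 1 := by
      rw [← pow_mul, mul_comm, ← hm, pow_orderOf_eq_one]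
    have a1 := hψ (h ^ m) hg1 (by rw [map_pow, e1, one_pow]) q hg2
    have a2 := hψ' (h ^ m) hg1 (by rw [map_pow, e2, one_pow]) q hg2
    have hpq : p ∣ q := by
      apply ringChar.dvd
      have := Ideal.Quotient.eq_zero_iff_mem.2 a1
      simpa using this
    have hp1 : p ≠ 1 := by
      have : Nontrivial (Algebra.adjoin ℤ (T : Set ℂ) ⧸ I) := Ideal.Quotient.nontrivial_iff.2 hI.ne_top
      exact CharP.ringChar_ne_one
    have : p = q := (hq.eq_one_or_self_of_dvd p hpq).resolve_left hp1
    rw [this] at hpI'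
    exact hpI' a2
  exact Finite.of_injective _ hinj

open Matrix ComplexOrder in
lemma aux_trace_nondeg {n : ℕ} (H : Subgroup (GL (Fin n) ℂ)) [Finite H]
    (a : Matrix (Fin n) (Fin n) ℂ)
    (ha : a ∈ Submodule.span ℂ (Set.range fun h : H => ((h : GL (Fin n) ℂ) : Matrix (Fin n) (Fin n) ℂ)))
    (htr : ∀ h : H, (a * ((h : GL (Fin n) ℂ) : Matrix (Fin n) (Fin n) ℂ)).trace = 0) : a = 0 := by
  classical
  have : Fintype H := Fintype.ofFinite H
  let m : H → Matrix (Fin n) (Fin n) ℂ := fun h => ((h : GL (Fin n) ℂ) : Matrix (Fin n) (Fin n) ℂ)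
  have hm : ∀ x y, m (x * y) = m x * m y := fun x y => by simp [m]
  have hm1 : m 1 = 1 := by simp [m]
  obtain ⟨c, hc⟩ := (Submodule.mem_span_range_iff_exists_fun ℂ).1 ha
  change ∑ h, c h • m h = a at hc
  let P : Matrix (Fin n) (Fin n) ℂ := ∑ h : H, (m h)ᴴ * m h
  have hPdef : P.PosDef := by
    have h1 : P = (m 1)ᴴ * m 1 + ∑ h ∈ Finset.univ.erase (1 : H), (m h)ᴴ * m h :=
      (Finset.add_sum_erase _ _ (Finset.mem_univ _)).symm
    rw [h1, hm1]
    refine Matrix.PosDef.add_posSemidef (by simpa using Matrix.PosDef.one) ?_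
    exact Matrix.posSemidef_sum _ fun i _ => Matrix.posSemidef_conjTranspose_mul_self _
  have hPinv : ∀ h, (m h)ᴴ * P = P * m h⁻¹ := by
    intro h
    have e : (m h)ᴴ * P * m h = P := by
      simp only [P, Finset.mul_sum, Finset.sum_mul]
      refine Fintype.sum_equiv (Equiv.mulRight h) _ _ fun x => ?_
      simp [hm, Matrix.mul_assoc]
    calc (m h)ᴴ * P = (m h)ᴴ * P * (m (h * h⁻¹)) := by simp [hm1]
      _ = (m h)ᴴ * P * m h * m h⁻¹ := by rw [hm, ← mul_assoc]
      _ = _ := by rw [e]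
  let b : Matrix (Fin n) (Fin n) ℂ := ∑ h : H, star (c h) • m h⁻¹
  have hab : aᴴ * P = P * b := by
    rw [← hc]
    simp only [b, Matrix.conjTranspose_sum, Matrix.conjTranspose_smul, Finset.sum_mul,
      Finset.mul_sum, Matrix.smul_mul, Matrix.mul_smul, hPinv]
  have htab : (a * b).trace = 0 := by
    simp only [b, Finset.mul_sum, Matrix.mul_smul, Matrix.trace_sum, Matrix.trace_smul]
    refine Finset.sum_eq_zero fun h _ => ?_
    have := htr h⁻¹
    change (a * m h⁻¹).trace = 0 at this
    rw [this, smul_zero]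
  obtain ⟨B, hB⟩ : ∃ B : Matrix (Fin n) (Fin n) ℂ, P = Bᴴ * B := by
    open scoped MatrixOrder in
    exact CStarAlgebra.nonneg_iff_eq_star_mul_self.mp hPdef.posSemidef.nonneg
  have hBu : IsUnit B.det := by
    have := (Matrix.isUnit_iff_isUnit_det _).1 hPdef.isUnit
    rw [hB, Matrix.det_mul] at this
    exact isUnit_of_mul_isUnit_right this
  have hBC : B * B⁻¹ = 1 := Matrix.mul_nonsing_inv _ hBu
  have hCB : B⁻¹ * B = 1 := Matrix.nonsing_inv_mul _ hBu
  generalize B⁻¹ = C at hBC hCB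
  have hCB' : Cᴴ * Bᴴ = 1 := by rw [← Matrix.conjTranspose_mul, hBC, Matrix.conjTranspose_one]
  have hX : (B * a * C)ᴴ = B * b * C := by
    have h1 : aᴴ * Bᴴ * B = Bᴴ * B * b := by rw [mul_assoc, ← hB, hab]
    calc (B * a * C)ᴴ = Cᴴ * (aᴴ * Bᴴ) * (B * C) := by
          rw [hBC]; simp [Matrix.conjTranspose_mul]
      _ = Cᴴ * (aᴴ * Bᴴ * B) * C := by simp only [mul_assoc]
      _ = (Cᴴ * Bᴴ) * (B * b * C) := by rw [h1]; simp only [mul_assoc]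
      _ = _ := by rw [hCB', one_mul]
  have hX0 : B * a * C = 0 := by
    rw [← Matrix.trace_mul_conjTranspose_self_eq_zero_iff, hX]
    have : B * a * C * (B * b * C) = B * (a * b) * C := by
      calc _ = B * a * (C * B) * b * C := by simp only [mul_assoc]
        _ = _ := by rw [hCB]; simp only [mul_assoc, one_mul]
    rw [this, Matrix.trace_mul_comm, ← mul_assoc, hCB, one_mul, htab]
  calc a = (C * B) * a * (C * B) := by rw [hCB, one_mul, mul_one]
    _ = C * (B * a * C) * B := by simp only [mul_assoc]
    _ = 0 := by rw [hX0]; simp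

lemma aux_trace_bound {n : ℕ} (g : Matrix (Fin n) (Fin n) ℂ) (k : ℕ) (hk : k ≠ 0)
    (hg : g ^ k = 1) : ‖g.trace‖ ≤ n := by
  rw [Matrix.trace_eq_sum_roots_charpoly]
  have hr : ∀ r ∈ g.charpoly.roots, ‖r‖ ≤ 1 := by
    intro r hr
    have h1 : r ∈ spectrum ℂ g :=
      Matrix.mem_spectrum_of_isRoot_charpoly (Polynomial.isRoot_of_mem_roots hr)
    have h2 := spectrum.pow_mem_pow g k h1
    rw [hg] at h2
    have h3 : r ^ k = 1 := by
      by_contra hne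
      apply h2
      have : (algebraMap ℂ (Matrix (Fin n) (Fin n) ℂ)) (r ^ k) - 1
          = algebraMap ℂ (Matrix (Fin n) (Fin n) ℂ) (r ^ k - 1) := by simp
      rw [spectrum.mem_resolventSet_iff, this]
      exact (IsUnit.mk0 _ (sub_ne_zero.2 hne)).map _
    exact (Complex.norm_eq_one_of_pow_eq_one h3 hk).le
  calc ‖g.charpoly.roots.sum‖ ≤ (g.charpoly.roots.map norm).sum := norm_multiset_sum_le _
    _ ≤ (g.charpoly.roots.map norm).card • (1 : ℝ) := by
        apply Multiset.sum_le_card_nsmul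
        intro x hx
        obtain ⟨r, h, rfl⟩ := Multiset.mem_map.1 hx
        exact hr r h
    _ ≤ n := by
        rw [Multiset.card_map, nsmul_eq_mul, mul_one]
        have := Polynomial.card_roots' g.charpoly
        rw [Matrix.charpoly_natDegree_eq_dim, Fintype.card_fin] at this
        exact_mod_cast this

lemma aux_fg {n : ℕ} (t : Finset (GL (Fin n) ℂ))
    (htor : ∀ h ∈ Subgroup.closure (t : Set (GL (Fin n) ℂ)), IsOfFinOrder h) :
    Finite (Subgroup.closure (t : Set (GL (Fin n) ℂ))) := by
  classical
  let T : Finset ℂ := ((t ∪ t.image (·⁻¹)) ×ˢ (Finset.univ : Finset (Fin n × Fin n))).image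
    fun x => (x.1 : Matrix (Fin n) (Fin n) ℂ) x.2.1 x.2.2
  have hT : ∀ g ∈ t ∪ t.image (·⁻¹), ∀ i j, (g : Matrix (Fin n) (Fin n) ℂ) i j ∈ T := by
    intro g hg i j
    exact Finset.mem_image.2 ⟨(g, (i, j)), Finset.mem_product.2 ⟨hg, Finset.mem_univ _⟩, rfl⟩
  have key : ∀ h ∈ Subgroup.closure (t : Set (GL (Fin n) ℂ)),
      (∀ i j, (h : Matrix (Fin n) (Fin n) ℂ) i j ∈ Algebra.adjoin ℤ (T : Set ℂ)) ∧
      (∀ i j, ((h⁻¹ : GL (Fin n) ℂ) : Matrix (Fin n) (Fin n) ℂ) i j ∈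
        Algebra.adjoin ℤ (T : Set ℂ)) := by
    intro h hh
    have hone : ∀ i j, ((1 : GL (Fin n) ℂ) : Matrix (Fin n) (Fin n) ℂ) i j ∈
        Algebra.adjoin ℤ (T : Set ℂ) := by
      intro i j
      rw [Units.val_one, Matrix.one_apply]
      split_ifs
      · exact one_mem _
      · exact zero_mem _
    have hmul : ∀ x y : GL (Fin n) ℂ,
        (∀ i j, (x : Matrix (Fin n) (Fin n) ℂ) i j ∈ Algebra.adjoin ℤ (T : Set ℂ)) →
        (∀ i j, (y : Matrix (Fin n) (Fin n) ℂ) i j ∈ Algebra.adjoin ℤ (T : Set ℂ)) →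
        (∀ i j, ((x * y : GL (Fin n) ℂ) : Matrix (Fin n) (Fin n) ℂ) i j ∈
          Algebra.adjoin ℤ (T : Set ℂ)) := by
      intro x y hx hy i j
      rw [Units.val_mul, Matrix.mul_apply]
      exact sum_mem fun k _ => mul_mem (hx i k) (hy k j)
    induction hh using Subgroup.closure_induction with
    | mem x hx =>
      refine ⟨fun i j => Algebra.subset_adjoin (hT x (Finset.mem_union_left _ hx) i j),
        fun i j => Algebra.subset_adjoin (hT x⁻¹ (Finset.mem_union_right _ ?_) i j)⟩
      exact Finset.mem_image_of_mem _ hx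
    | one => exact ⟨hone, by rw [inv_one]; exact hone⟩
    | mul x y _ _ hx hy =>
      refine ⟨hmul x y hx.1 hy.1, ?_⟩
      rw [mul_inv_rev]
      exact hmul _ _ hy.2 hx.2
    | inv x _ hx => exact ⟨hx.2, by rw [inv_inv]; exact hx.1⟩
  exact aux_schur _ T (fun h hh => (key h hh).1) htor

lemma aux_nhds {n : ℕ} (Γ : Subgroup (GL (Fin n) ℂ))
    (hdiscrete : DiscreteTopology
      ((fun g : GL (Fin n) ℂ => (g : Matrix (Fin n) (Fin n) ℂ)) '' (Γ : Set (GL (Fin n) ℂ)))) :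
    ∃ U ∈ nhds (1 : Matrix (Fin n) (Fin n) ℂ), ∀ g ∈ Γ,
      (g : Matrix (Fin n) (Fin n) ℂ) ∈ U → g = 1 := by
  have h1 : (1 : Matrix (Fin n) (Fin n) ℂ) ∈
      ((fun g : GL (Fin n) ℂ => (g : Matrix (Fin n) (Fin n) ℂ)) '' (Γ : Set (GL (Fin n) ℂ))) :=
    ⟨1, one_mem Γ, by simp⟩
  obtain ⟨U, hU, hU'⟩ := (nhds_inter_eq_singleton_of_mem_discrete ⟨hdiscrete⟩ h1)
  refine ⟨U, hU, fun g hg hgU => ?_⟩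
  have : (g : Matrix (Fin n) (Fin n) ℂ) ∈ ({1} : Set (Matrix (Fin n) (Fin n) ℂ)) := by
    rw [← hU']
    exact ⟨hgU, g, hg, rfl⟩
  exact Units.ext (by simpa using this)

section
open scoped Matrix.Norms.Operator

lemma aux_bounded {n : ℕ} (Γ : Subgroup (GL (Fin n) ℂ)) (htor : ∀ g ∈ Γ, IsOfFinOrder g) :
    ∃ C : ℝ, ∀ g ∈ Γ, ‖(g : Matrix (Fin n) (Fin n) ℂ)‖ ≤ C := by
  classical
  let f : GL (Fin n) ℂ → Matrix (Fin n) (Fin n) ℂ := fun g => g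
  obtain ⟨t, hts, -, htspan, -⟩ :=
    Submodule.exists_finset_span_eq_linearIndepOn ℂ (f '' (Γ : Set (GL (Fin n) ℂ)))
  obtain ⟨t', ht', rfl⟩ := Finset.subset_set_image_iff.1 hts
  set H := Subgroup.closure (t' : Set (GL (Fin n) ℂ)) with hH
  have hHΓ : H ≤ Γ := (Subgroup.closure_le _).2 ht'
  have hfin : Finite H := aux_fg t' fun h hh => htor h (hHΓ hh)
  have : Fintype H := Fintype.ofFinite H
  let V := Submodule.span ℂ (Set.range fun h : H => f h)
  have hΓV : ∀ g ∈ Γ, f g ∈ V := by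
    intro g hg
    have : f g ∈ Submodule.span ℂ (f '' (Γ : Set (GL (Fin n) ℂ))) :=
      Submodule.subset_span ⟨g, hg, rfl⟩
    rw [← htspan] at this
    refine Submodule.span_mono ?_ this
    intro x hx
    rw [Finset.coe_image] at hx
    obtain ⟨y, hy, rfl⟩ := hx
    exact ⟨⟨y, Subgroup.subset_closure hy⟩, rfl⟩
  let L : V →ₗ[ℂ] (H → ℂ) := LinearMap.pi fun h =>
    (Matrix.traceLinearMap (Fin n) ℂ ℂ) ∘ₗ (LinearMap.mulRight ℂ (f h)) ∘ₗ V.subtype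
  have hLa : ∀ v h, L v h = ((v : Matrix (Fin n) (Fin n) ℂ) * f h).trace := fun v h => rfl
  have hL : LinearMap.ker L = ⊥ := by
    rw [LinearMap.ker_eq_bot']
    intro v hv
    apply Subtype.ext
    refine aux_trace_nondeg H v v.2 fun h => ?_
    have := congrFun hv h
    rwa [hLa] at this
  obtain ⟨K, hK, hanti⟩ := L.exists_antilipschitzWith hL
  refine ⟨K * n, fun g hg => ?_⟩
  have h1 := hanti.le_mul_norm_sub ⟨f g, hΓV g hg⟩ 0
  rw [map_zero, add_zero, add_zero, norm_neg, norm_neg] at h1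
  refine le_trans h1 (mul_le_mul_of_nonneg_left ?_ K.2)
  rw [pi_norm_le_iff_of_nonneg (by positivity)]
  intro h
  rw [hLa]
  have hgh : IsOfFinOrder (g * h) := htor _ (mul_mem hg (hHΓ h.2))
  refine aux_trace_bound _ (orderOf (g * (h : GL (Fin n) ℂ))) hgh.orderOf_pos.ne' ?_
  have := pow_orderOf_eq_one (g * (h : GL (Fin n) ℂ))
  have := congrArg f this
  simp only [f] at this ⊢
  rw [Units.val_pow_eq_pow_val, Units.val_mul, Units.val_one] at this
  exact this

lemma aux_final {n : ℕ} (Γ : Subgroup (GL (Fin n) ℂ)) (htor : ∀ g ∈ Γ, IsOfFinOrder g)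
    (U : Set (Matrix (Fin n) (Fin n) ℂ)) (hU : U ∈ nhds 1)
    (hΓU : ∀ g ∈ Γ, (g : Matrix (Fin n) (Fin n) ℂ) ∈ U → g = 1) :
    (Γ : Set (GL (Fin n) ℂ)).Finite := by
  obtain ⟨ε, hε, hball⟩ := Metric.mem_nhds_iff.1 hU
  obtain ⟨C, hC⟩ := aux_bounded Γ htor
  let f : GL (Fin n) ℂ → Matrix (Fin n) (Fin n) ℂ := fun g => g
  have hC0 : 0 ≤ C := le_trans (norm_nonneg _) (hC 1 (one_mem _))
  have hC1 : 0 < C + 1 := by linarith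
  have hsep : ∀ g ∈ Γ, ∀ h ∈ Γ, dist (f g) (f h) < ε / (C + 1) → g = h := by
    intro g hg h hh hd
    have : h⁻¹ * g = 1 := by
      apply hΓU _ (mul_mem (inv_mem hh) hg)
      apply hball
      rw [Metric.mem_ball, dist_eq_norm]
      rw [dist_eq_norm] at hd
      have e : ((h⁻¹ * g : GL (Fin n) ℂ) : Matrix (Fin n) (Fin n) ℂ) - 1
          = f h⁻¹ * (f g - f h) := by
        have : f h⁻¹ * f h = 1 := by
          change ((h⁻¹ : GL (Fin n) ℂ) : Matrix (Fin n) (Fin n) ℂ) * h = 1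
          rw [← Units.val_mul, inv_mul_cancel, Units.val_one]
        rw [mul_sub, this, Units.val_mul]
      rw [e]
      calc _ ≤ ‖f h⁻¹‖ * ‖f g - f h‖ := norm_mul_le _ _
        _ ≤ (C + 1) * ‖f g - f h‖ := by
            gcongr
            exact (hC _ (inv_mem hh)).trans (by linarith)
        _ < (C + 1) * (ε / (C + 1)) := by gcongr
        _ = ε := by field_simp
    exact (inv_mul_eq_one.1 this).symm
  have : ProperSpace (Matrix (Fin n) (Fin n) ℂ) := FiniteDimensional.proper ℂ _
  have htb : TotallyBounded (f '' (Γ : Set (GL (Fin n) ℂ))) := by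
    refine (isCompact_closedBall (0 : Matrix (Fin n) (Fin n) ℂ) C).totallyBounded.subset ?_
    rintro _ ⟨g, hg, rfl⟩
    simpa using hC g hg
  obtain ⟨t, hts, htf, hcov⟩ := Metric.finite_approx_of_totallyBounded htb (ε / (C + 1))
    (by positivity)
  have : (Γ : Set (GL (Fin n) ℂ)) ⊆ f ⁻¹' t := by
    intro g hg
    obtain ⟨y, hy, hgy⟩ := Set.mem_iUnion₂.1 (hcov ⟨g, hg, rfl⟩)
    obtain ⟨h, hh, rfl⟩ := hts hy
    rw [hsep g hg h hh hgy]
    exact hy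
  exact (htf.preimage (fun a _ b _ hab => Units.ext hab)).subset this

end


/-!
STATEMENT 14: for n ≥ 1, every discrete torsion subgroup of GL_n(ℂ) is finite.
Discreteness is expressed by saying that the image of Γ in the space of n×n
complex matrices is a discrete subset (for the subspace topology).
-/

theorem stmt_14 (n : ℕ) (hn : 1 ≤ n)
    (Γ : Subgroup (GL (Fin n) ℂ))
    -- Γ is discrete as a subset of the n×n complex matrices:
    (hdiscrete : DiscreteTopology
      ((fun g : GL (Fin n) ℂ => (g : Matrix (Fin n) (Fin n) ℂ)) '' (Γ : Set (GL (Fin n) ℂ))))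
    -- Γ is a torsion group:
    (htorsion : ∀ g ∈ Γ, IsOfFinOrder g) :
    (Γ : Set (GL (Fin n) ℂ)).Finite := by
  obtain ⟨U, hU, h⟩ := aux_nhds Γ hdiscrete
  exact aux_final Γ htorsion U hU h
end
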